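/- Let n ≥ 2, let X be B or C, let A be the Cartan matrix of type X_n and ι an admissible sequence adapted to A. Let T = [j_1,…,j_k]^X_s ∈ Tab_{X,ι} and t ∈ [1,n−1], and suppose there exists i' ∈ [1,k] with j_{i'} = ovl(t+1) and j_{i'+1} ≠ ovl(t). Set M := s+k−i'+n−t+P(t). Then M ≥ 1 and: (1) the coefficient of x_{M,t} in T is 0, 1 or 2; (2) this coefficient is 0 if and only if j_{i'−n+t+1} = t+1 and j_{i'−n+t} ≠ t; (3) this coefficient is 2 if and only if j_{i'−n+t+1} ≠ t+1 and j_{i'−n+t} = t; and (4) if this coefficient is 1, then S_{M,t}T equals the tableau obtained from T by replacing the entry j_{i'} = ovl(t+1) by ovl(t). -/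

import Mathlib

noncomputable section

/-- The coordinate linear form `x_k` (as a coefficient vector). -/
def xc (k : ℕ) : ℕ → ℚ := fun l => if l = k then 1 else 0

/-- Cartan matrix of type `A_n`. -/
def cartanA (_n : ℕ) (i j : ℕ) : ℤ :=
  if i = j then 2 else if i + 1 = j ∨ j + 1 = i then -1 else 0

/-- Cartan matrix of type `B_n`. -/
def cartanB (n : ℕ) (i j : ℕ) : ℤ :=
  if i = j then 2
  else if i = n ∧ j = n - 1 then -2
  else if i + 1 = j ∨ j + 1 = i then -1 else 0

/-- Cartan matrix of type `C_n`. -/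
def cartanC (n : ℕ) (i j : ℕ) : ℤ :=
  if i = j then 2
  else if i = n - 1 ∧ j = n then -2
  else if i + 1 = j ∨ j + 1 = i then -1 else 0

/-- Cartan matrix of type `D_n`. -/
def cartanD (n : ℕ) (i j : ℕ) : ℤ :=
  if i = j then 2
  else if (i = n - 1 ∧ j = n) ∨ (i = n ∧ j = n - 1) then 0
  else if (i + 1 = j ∨ j + 1 = i) ∨ (i = n ∧ j = n - 2) ∨ (i = n - 2 ∧ j = n) then -1
  else 0

/-- `ι` (with positions indexed by `k ≥ 1`) takes values in `{1,…,n}`, has no two equal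
consecutive entries, and every index occurs infinitely often. -/
def Admissible (n : ℕ) (ι : ℕ → ℕ) : Prop :=
  (∀ k, 1 ≤ k → 1 ≤ ι k ∧ ι k ≤ n) ∧
  (∀ k, 1 ≤ k → ι k ≠ ι (k + 1)) ∧
  (∀ i, 1 ≤ i → i ≤ n → ∀ N, ∃ k, N ≤ k ∧ ι k = i)

/-- `k^+`: the next position after `k` carrying the same letter. -/
def kplus (ι : ℕ → ℕ) (k : ℕ) : ℕ := sInf {l | k < l ∧ ι l = ι k}

/-- `k^-`: the previous position (`≥ 1`) carrying the same letter, `0` if none. -/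
def kminus (ι : ℕ → ℕ) (k : ℕ) : ℕ := sSup {l | 0 < l ∧ l < k ∧ ι l = ι k}

/-- The linear form `β_k` (with `β_0 = 0`). -/
def beta (A : ℕ → ℕ → ℤ) (ι : ℕ → ℕ) (k : ℕ) : ℕ → ℚ :=
  if k = 0 then 0
  else xc k + (∑ j ∈ Finset.Ioo k (kplus ι k), (A (ι k) (ι j) : ℚ) • xc j) + xc (kplus ι k)

/-- The piecewise-linear operator `S_k`. -/
def Sop (A : ℕ → ℕ → ℤ) (ι : ℕ → ℕ) (k : ℕ) (φ : ℕ → ℚ) : ℕ → ℚ :=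
  if 0 < φ k then φ - φ k • beta A ι k
  else φ - φ k • beta A ι (kminus ι k)

/-- Membership in `Ξ_ι`: forms obtained from some `x_{j_0}` by finitely many operators `S_k`. -/
inductive XiMem (A : ℕ → ℕ → ℤ) (ι : ℕ → ℕ) : (ℕ → ℚ) → Prop
  | base (k : ℕ) (hk : 1 ≤ k) : XiMem A ι (xc k)
  | step (k : ℕ) (hk : 1 ≤ k) (φ : ℕ → ℚ) (h : XiMem A ι φ) : XiMem A ι (Sop A ι k φ)

/-- The set `Ξ_ι`. -/
def Xi (A : ℕ → ℕ → ℤ) (ι : ℕ → ℕ) : Set (ℕ → ℚ) := { φ | XiMem A ι φ }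

/-- Forms obtained from a set `g` of generators by finitely many operators `S_k`. -/
inductive XiMemFrom (A : ℕ → ℕ → ℤ) (ι : ℕ → ℕ) (g : Set (ℕ → ℚ)) : (ℕ → ℚ) → Prop
  | base (φ : ℕ → ℚ) (h : φ ∈ g) : XiMemFrom A ι g φ
  | step (k : ℕ) (hk : 1 ≤ k) (φ : ℕ → ℚ) (h : XiMemFrom A ι g φ) :
      XiMemFrom A ι g (Sop A ι k φ)

/-- `ι` is adapted to the Cartan matrix `A`: for `i ≠ j` with `a_{i,j} ≠ 0`, consecutive
members of the subsequence of `ι` consisting of the letters `i`, `j` are distinct. -/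
def Adapted (n : ℕ) (A : ℕ → ℕ → ℤ) (ι : ℕ → ℕ) : Prop :=
  ∀ i j, 1 ≤ i → i ≤ n → 1 ≤ j → j ≤ n → i ≠ j → A i j ≠ 0 →
    ∀ k l, 1 ≤ k → k < l → (ι k = i ∨ ι k = j) → (ι l = i ∨ ι l = j) →
      (∀ m, k < m → m < l → ι m ≠ i ∧ ι m ≠ j) → ι k ≠ ι l

/-- Position of the first occurrence of the letter `i` in `ι`. -/
def firstOcc (ι : ℕ → ℕ) (i : ℕ) : ℕ := sInf {k | 1 ≤ k ∧ ι k = i}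

/-- `p_{i,j} = 1` iff the first occurrence of `i` precedes the first occurrence of `j`. -/
def pval (ι : ℕ → ℕ) (i j : ℕ) : ℕ := if firstOcc ι i < firstOcc ι j then 1 else 0

/-- The function `P(k)` for types A, B, C (and `P(k) = 0` for `k > n`, `k ≤ 1`). -/
def PABC (ι : ℕ → ℕ) (n k : ℕ) : ℕ :=
  if k ≤ n then ∑ t ∈ Finset.Icc 2 k, pval ι t (t - 1) else 0

/-- The function `P(k)` for type D. -/
def PD (ι : ℕ → ℕ) (n k : ℕ) : ℕ :=
  if k = n then (∑ t ∈ Finset.Icc 2 (n - 2), pval ι t (t - 1)) + pval ι n (n - 2)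
  else if k ≤ n then ∑ t ∈ Finset.Icc 2 k, pval ι t (t - 1) else 0

/-- `occPos ι j s`: the position of the `s`-th occurrence of the letter `j` in `ι`
(`0` for `s = 0`). -/
def occPos (ι : ℕ → ℕ) (j : ℕ) : ℕ → ℕ
  | 0 => 0
  | s + 1 => sInf {k | occPos ι j s < k ∧ ι k = j}

/-- The double-indexed coordinate form `x_{s,j}`, with the conventions
`x_{s,0} = x_{s,n+1} = 0` and `x_{s,j} = 0` for `s ≤ 0`. -/
def xsj (ι : ℕ → ℕ) (n : ℕ) (s : ℤ) (j : ℕ) : ℕ → ℚ :=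
  if 1 ≤ s ∧ 1 ≤ j ∧ j ≤ n then xc (occPos ι j s.toNat) else 0

/-- The double-indexed form `β_{s,j}`. -/
def betasj (A : ℕ → ℕ → ℤ) (ι : ℕ → ℕ) (s : ℤ) (j : ℕ) : ℕ → ℚ :=
  beta A ι (occPos ι j s.toNat)

/-- The double-indexed operator `S_{m,j}`. -/
def Ssj (A : ℕ → ℕ → ℤ) (ι : ℕ → ℕ) (m j : ℕ) (φ : ℕ → ℚ) : ℕ → ℚ :=
  Sop A ι (occPos ι j m) φ

/- Entries of the ordered sets `J_X` are encoded as natural numbers: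
an unbarred entry `j ∈ {1,…,n}` is encoded as `j`, a barred entry `j̄` is
encoded as `2n+1-j` (so that `n̄ = n+1, …, 1̄ = 2n` and the total order of
`J_B = J_C` is the numerical order), and the extra symbol `ovl(n+1)` of
types C and D is encoded as `0`. -/

/-- The box of type A. -/
def boxA (ι : ℕ → ℕ) (n : ℕ) (s : ℤ) (j : ℕ) : ℕ → ℚ :=
  xsj ι n (s + (PABC ι n j : ℤ)) j - xsj ι n (s + (PABC ι n (j - 1) : ℤ) + 1) (j - 1)

/-- The box of type B. -/
def boxB (ι : ℕ → ℕ) (n : ℕ) (s : ℤ) (e : ℕ) : ℕ → ℚ :=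
  if e ≤ n then
    xsj ι n (s + (PABC ι n e : ℤ)) e - xsj ι n (s + (PABC ι n (e - 1) : ℤ) + 1) (e - 1)
  else
    xsj ι n (s + (PABC ι n (2 * n - e) : ℤ) + (n : ℤ) - ((2 * n + 1 - e : ℕ) : ℤ) + 1)
        (2 * n - e)
      - xsj ι n (s + (PABC ι n (2 * n + 1 - e) : ℤ) + (n : ℤ) - ((2 * n + 1 - e : ℕ) : ℤ) + 1)
          (2 * n + 1 - e)

/-- The box of type C (`ovl(n+1)` encoded as `0`). -/
def boxC (ι : ℕ → ℕ) (n : ℕ) (s : ℤ) (e : ℕ) : ℕ → ℚ :=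
  if e = 0 then xsj ι n (s + (PABC ι n n : ℤ)) n
  else if e < n then
    xsj ι n (s + (PABC ι n e : ℤ)) e - xsj ι n (s + (PABC ι n (e - 1) : ℤ) + 1) (e - 1)
  else if e = n then
    (2 : ℚ) • xsj ι n (s + (PABC ι n n : ℤ)) n
      - xsj ι n (s + (PABC ι n (n - 1) : ℤ) + 1) (n - 1)
  else if e = n + 1 then
    xsj ι n (s + (PABC ι n (n - 1) : ℤ) + 1) (n - 1)
      - (2 : ℚ) • xsj ι n (s + (PABC ι n n : ℤ) + 1) n
  else
    xsj ι n (s + (PABC ι n (2 * n - e) : ℤ) + (n : ℤ) - ((2 * n + 1 - e : ℕ) : ℤ) + 1)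
        (2 * n - e)
      - xsj ι n (s + (PABC ι n (2 * n + 1 - e) : ℤ) + (n : ℤ) - ((2 * n + 1 - e : ℕ) : ℤ) + 1)
          (2 * n + 1 - e)

/-- The box of type D (`ovl(n+1)` encoded as `0`, `n̄` as `n+1`, `ovl(n-1)` as `n+2`). -/
def boxD (ι : ℕ → ℕ) (n : ℕ) (s : ℤ) (e : ℕ) : ℕ → ℚ :=
  if e = 0 then xsj ι n (s + (PD ι n n : ℤ)) n
  else if e ≤ n - 2 then
    xsj ι n (s + (PD ι n e : ℤ)) e - xsj ι n (s + (PD ι n (e - 1) : ℤ) + 1) (e - 1)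
  else if e = n - 1 then
    xsj ι n (s + (PD ι n (n - 1) : ℤ)) (n - 1) + xsj ι n (s + (PD ι n n : ℤ)) n
      - xsj ι n (s + (PD ι n (n - 2) : ℤ) + 1) (n - 2)
  else if e = n then
    xsj ι n (s + (PD ι n n : ℤ)) n - xsj ι n (s + (PD ι n (n - 1) : ℤ) + 1) (n - 1)
  else if e = n + 1 then
    xsj ι n (s + (PD ι n (n - 1) : ℤ)) (n - 1) - xsj ι n (s + (PD ι n n : ℤ) + 1) n
  else if e = n + 2 then
    xsj ι n (s + (PD ι n (n - 2) : ℤ) + 1) (n - 2)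
      - xsj ι n (s + (PD ι n (n - 1) : ℤ) + 1) (n - 1)
      - xsj ι n (s + (PD ι n n : ℤ) + 1) n
  else
    xsj ι n (s + (PD ι n (2 * n - e) : ℤ) + (n : ℤ) - ((2 * n + 1 - e : ℕ) : ℤ)) (2 * n - e)
      - xsj ι n (s + (PD ι n (2 * n + 1 - e) : ℤ) + (n : ℤ) - ((2 * n + 1 - e : ℕ) : ℤ))
          (2 * n + 1 - e)

/-- The column tableau `[j_1,…,j_k]_s = Σ_{i=1}^k box_{s+k-i}(j_i)`. -/
def tab (box : ℤ → ℕ → ℕ → ℚ) (s : ℤ) (k : ℕ) (j : ℕ → ℕ) : ℕ → ℚ :=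
  ∑ i ∈ Finset.Icc 1 k, box (s + (k : ℤ) - (i : ℤ)) (j i)

/-- The set `Tab_{A,ι}`. -/
def TabA (ι : ℕ → ℕ) (n : ℕ) : Set (ℕ → ℚ) :=
  { T | ∃ (k : ℕ) (s : ℤ) (j : ℕ → ℕ),
      1 ≤ k ∧ k ≤ n ∧
      (∀ i, 1 ≤ i → i ≤ k → 1 ≤ j i ∧ j i ≤ n + 1) ∧
      (∀ i, 1 ≤ i → i < k → j i < j (i + 1)) ∧
      1 - (PABC ι n k : ℤ) ≤ s ∧
      T = tab (boxA ι n) s k j }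

/-- `|·|` on encoded entries of `J_B = J_C`. -/
def absJ (n e : ℕ) : ℕ := if e ≤ n then e else 2 * n + 1 - e

/-- The set `Tab_{B,ι}`. -/
def TabB (ι : ℕ → ℕ) (n : ℕ) : Set (ℕ → ℚ) :=
  { T | ∃ (k : ℕ) (s : ℤ) (j : ℕ → ℕ),
      1 ≤ k ∧ k ≤ n ∧
      (∀ i, 1 ≤ i → i ≤ k → 1 ≤ j i ∧ j i ≤ 2 * n) ∧
      (∀ i, 1 ≤ i → i < k → j i < j (i + 1)) ∧
      (k = n → ∀ l m, 1 ≤ l → l < m → m ≤ k → absJ n (j l) ≠ absJ n (j m)) ∧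
      1 - (PABC ι n k : ℤ) ≤ s ∧
      T = tab (boxB ι n) s k j }

/-- Defining conditions of `Tab_{C,ι}` on the data `(k,s,j)`. -/
def TabCcond (ι : ℕ → ℕ) (n : ℕ) (k : ℕ) (s : ℤ) (j : ℕ → ℕ) : Prop :=
  (1 ≤ k ∧ k ≤ n - 1 ∧
    (∀ i, 1 ≤ i → i ≤ k → 1 ≤ j i ∧ j i ≤ 2 * n) ∧
    (∀ i, 1 ≤ i → i < k → j i < j (i + 1)) ∧
    1 - (PABC ι n k : ℤ) ≤ s)
  ∨
  (j 1 = 0 ∧ 1 ≤ k ∧ k ≤ n + 1 ∧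
    (∀ i, 2 ≤ i → i ≤ k → n + 1 ≤ j i ∧ j i ≤ 2 * n) ∧
    (∀ i, 2 ≤ i → i < k → j i < j (i + 1)) ∧
    1 - (PABC ι n n : ℤ) ≤ s)

/-- The set `Tab_{C,ι}`. -/
def TabC (ι : ℕ → ℕ) (n : ℕ) : Set (ℕ → ℚ) :=
  { T | ∃ k s j, TabCcond ι n k s j ∧ T = tab (boxC ι n) s k j }

/-- The partial order on (encoded) `J_D`: `a ≤ b` iff `a = b`, or `a < b` numerically and
`(a,b)` is not the incomparable pair `(n, n̄)`. -/
def leD (n a b : ℕ) : Prop := a = b ∨ (a < b ∧ ¬(a = n ∧ b = n + 1))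

/-- Defining conditions of `Tab_{D,ι}` on the data `(k,s,j)`. -/
def TabDcond (ι : ℕ → ℕ) (n : ℕ) (k : ℕ) (s : ℤ) (j : ℕ → ℕ) : Prop :=
  (1 ≤ k ∧ k ≤ n - 2 ∧
    (∀ i, 1 ≤ i → i ≤ k → 1 ≤ j i ∧ j i ≤ 2 * n) ∧
    (∀ i, 1 ≤ i → i < k → ¬ leD n (j (i + 1)) (j i)) ∧
    1 - (PD ι n k : ℤ) ≤ s)
  ∨
  (j 1 = 0 ∧ 1 ≤ k ∧ k ≤ n + 1 ∧
    (∀ i, 2 ≤ i → i ≤ k → n + 1 ≤ j i ∧ j i ≤ 2 * n) ∧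
    (∀ i, 2 ≤ i → i < k → j i < j (i + 1)) ∧
    (k % 2 = 0 → 1 - (PD ι n (n - 1) : ℤ) ≤ s) ∧
    (k % 2 = 1 → 1 - (PD ι n n : ℤ) ≤ s))

/-- The set `Tab_{D,ι}`. -/
def TabD (ι : ℕ → ℕ) (n : ℕ) : Set (ℕ → ℚ) :=
  { T | ∃ k s j, TabDcond ι n k s j ∧ T = tab (boxD ι n) s k j }

end

/-!
For `t < n` the letter `t` enters a box of type `B` or `C` only through the entries `t`, `t + 1`,
`ovl(t+1)` and `ovl(t)`, with coefficients `1`, `-1`, `1` and `-1`, and each of them contributes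
to `x_{M,t}` at only one position of the column. When `ovl(t+1)` stands at position `i'`, the
corresponding position of `ovl(t)` is `i' + 1`, where it is absent by assumption; hence the
coefficient is `1 + [j_{i'-n+t} = t] - [j_{i'-n+t+1} = t+1]`.

Since neighbouring letters alternate in `ι`, exactly one occurrence of `j` lies between the `m`-th
and the `(m+1)`-st occurrence of an adjacent letter `t`, namely the one of number `m + p_{j,t}`.
This turns `β_{m,t}` into a combination of four coordinates which is exactly the difference of the
boxes of `ovl(t+1)` and `ovl(t)`.
-/

open Filter Finset

section Occurrences

variable {ι : ℕ → ℕ} {i j : ℕ}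

theorem occPos_succ_mem (hi : ∃ᶠ k in atTop, ι k = i) (s : ℕ) :
    occPos ι i s < occPos ι i (s + 1) ∧ ι (occPos ι i (s + 1)) = i :=
  Nat.sInf_mem (s := {k | occPos ι i s < k ∧ ι k = i}) (frequently_atTop'.1 hi _)

theorem occPos_succ_le {s q : ℕ} (hq : occPos ι i s < q) (h : ι q = i) :
    occPos ι i (s + 1) ≤ q :=
  Nat.sInf_le ⟨hq, h⟩

theorem strictMono_occPos (hi : ∃ᶠ k in atTop, ι k = i) : StrictMono (occPos ι i) :=
  strictMono_nat_of_lt_succ fun s => (occPos_succ_mem hi s).1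

theorem occPos_pos (hi : ∃ᶠ k in atTop, ι k = i) {s : ℕ} (hs : 0 < s) : 0 < occPos ι i s :=
  strictMono_occPos hi hs

theorem apply_occPos (hi : ∃ᶠ k in atTop, ι k = i) {s : ℕ} (hs : 0 < s) :
    ι (occPos ι i s) = i := by
  obtain ⟨s, rfl⟩ := Nat.exists_eq_add_of_le' hs
  exact (occPos_succ_mem hi s).2

theorem apply_ne_of_mem_Ioo_occPos {s q : ℕ}
    (hq : q ∈ Ioo (occPos ι i s) (occPos ι i (s + 1))) : ι q ≠ i := fun h =>
  (occPos_succ_le (mem_Ioo.1 hq).1 h).not_gt (mem_Ioo.1 hq).2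

theorem occPos_inj {s r : ℕ} (hi : ∃ᶠ k in atTop, ι k = i) (hj : ∃ᶠ k in atTop, ι k = j)
    (hs : 0 < s) (hr : 0 < r) : occPos ι i s = occPos ι j r ↔ i = j ∧ s = r := by
  refine ⟨fun h => ?_, by rintro ⟨rfl, rfl⟩; rfl⟩
  obtain rfl : i = j := by rw [← apply_occPos hi hs, h, apply_occPos hj hr]
  exact ⟨rfl, (strictMono_occPos hi).injective h⟩

theorem kplus_occPos (hi : ∃ᶠ k in atTop, ι k = i) {s : ℕ} (hs : 0 < s) :
    kplus ι (occPos ι i s) = occPos ι i (s + 1) := by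
  rw [kplus, apply_occPos hi hs, occPos]

theorem firstOcc_ne (hi : ∃ᶠ k in atTop, ι k = i) (hj : ∃ᶠ k in atTop, ι k = j) (hij : i ≠ j) :
    firstOcc ι i ≠ firstOcc ι j := fun h =>
  hij ((occPos_inj hi hj one_pos one_pos).1 h).1

theorem pval_le_one : pval ι i j ≤ 1 := by
  unfold pval
  split_ifs <;> simp

theorem pval_add_pval_swap (hi : ∃ᶠ k in atTop, ι k = i) (hj : ∃ᶠ k in atTop, ι k = j)
    (hij : i ≠ j) : pval ι i j + pval ι j i = 1 := by
  have := firstOcc_ne hi hj hij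
  unfold pval
  split_ifs <;> omega

end Occurrences

section Alternation

/-- The subsequence of `ι` formed by all occurrences of the letters `i` and `j` alternates between
`i` and `j`. As in `Adapted`, this is expressed by the distinctness of its consecutive members. -/
def Alternates (ι : ℕ → ℕ) (i j : ℕ) : Prop :=
  ∀ k l, 1 ≤ k → k < l → (ι k = i ∨ ι k = j) → (ι l = i ∨ ι l = j) →
    (∀ m, k < m → m < l → ι m ≠ i ∧ ι m ≠ j) → ι k ≠ ι l

variable {ι : ℕ → ℕ} {i j : ℕ}

theorem Alternates.symm (h : Alternates ι i j) : Alternates ι j i :=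
  fun k l hk hkl hιk hιl hm =>
    h k l hk hkl hιk.symm hιl.symm fun m hkm hml => (hm m hkm hml).symm

theorem Alternates.exists_mem_Ioo (h : Alternates ι i j) (hi : ∃ᶠ k in atTop, ι k = i) {s : ℕ}
    (hs : 0 < s) : ∃ q ∈ Ioo (occPos ι i s) (occPos ι i (s + 1)), ι q = j := by
  by_contra! hne
  have hs_letter := apply_occPos hi hs
  obtain ⟨hlt, hs'_letter⟩ := occPos_succ_mem hi s
  refine h _ _ (occPos_pos hi hs) hlt (.inl hs_letter) (.inl hs'_letter) (fun m hm hm' => ?_)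
    (hs_letter.trans hs'_letter.symm)
  have hmem := mem_Ioo.2 ⟨hm, hm'⟩
  exact ⟨apply_ne_of_mem_Ioo_occPos hmem, hne m hmem⟩

theorem Alternates.occPos_interlace (h : Alternates ι i j) (hi : ∃ᶠ k in atTop, ι k = i)
    (hj : ∃ᶠ k in atTop, ι k = j) (hf : firstOcc ι i < firstOcc ι j) (s : ℕ) :
    occPos ι j s < occPos ι i (s + 1) ∧ occPos ι i (s + 1) < occPos ι j (s + 1) := by
  induction s with
  | zero => exact ⟨occPos_pos hi one_pos, hf⟩
  | succ s ih =>
    obtain ⟨q, hq, hqj⟩ := h.exists_mem_Ioo hi s.succ_pos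
    obtain ⟨r, hr, hri⟩ := h.symm.exists_mem_Ioo hj s.succ_pos
    rw [mem_Ioo] at hq hr
    have hji : occPos ι j (s + 1) < occPos ι i (s + 2) :=
      (occPos_succ_le (ih.1.trans hq.1) hqj).trans_lt hq.2
    exact ⟨hji, (occPos_succ_le (ih.2.trans hr.1) hri).trans_lt hr.2⟩

theorem Alternates.occPos_add_pval_lt (h : Alternates ι i j) (hi : ∃ᶠ k in atTop, ι k = i)
    (hj : ∃ᶠ k in atTop, ι k = j) (hij : i ≠ j) (s : ℕ) :
    occPos ι j (s + pval ι j i) < occPos ι i (s + 1) := by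
  unfold pval
  split_ifs with hf
  · exact (h.symm.occPos_interlace hj hi hf s).2
  · exact (h.occPos_interlace hi hj ((firstOcc_ne hi hj hij).lt_of_le (not_lt.1 hf)) s).1

theorem Alternates.lt_occPos_add_pval (h : Alternates ι i j) (hi : ∃ᶠ k in atTop, ι k = i)
    (hj : ∃ᶠ k in atTop, ι k = j) (hij : i ≠ j) {s : ℕ} (hs : 0 < s) :
    occPos ι i s < occPos ι j (s + pval ι j i) := by
  obtain ⟨s, rfl⟩ := Nat.exists_eq_add_of_le' hs
  unfold pval
  split_ifs with hf
  · exact (h.symm.occPos_interlace hj hi hf (s + 1)).1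
  · exact (h.occPos_interlace hi hj ((firstOcc_ne hi hj hij).lt_of_le (not_lt.1 hf)) s).2

theorem Alternates.filter_Ioo_occPos (h : Alternates ι i j) (hi : ∃ᶠ k in atTop, ι k = i)
    (hj : ∃ᶠ k in atTop, ι k = j) (hij : i ≠ j) {s : ℕ} (hs : 0 < s) :
    {q ∈ Ioo (occPos ι i s) (occPos ι i (s + 1)) | ι q = j} =
      {occPos ι j (s + pval ι j i)} := by
  have hlt := h.lt_occPos_add_pval hi hj hij hs
  have hgt := h.occPos_add_pval_lt hi hj hij s
  have hnext : occPos ι i (s + 1) < occPos ι j (s + pval ι j i + 1) := by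
    rw [add_right_comm]
    exact h.lt_occPos_add_pval hi hj hij s.succ_pos
  ext q
  simp only [mem_filter, mem_Ioo, mem_singleton]
  constructor
  · rintro ⟨⟨hsq, hqs⟩, hq⟩
    have hge : occPos ι j (s + pval ι j i) ≤ q := by
      obtain ⟨s, rfl⟩ := Nat.exists_eq_add_of_le' hs
      rw [add_right_comm]
      exact occPos_succ_le ((h.occPos_add_pval_lt hi hj hij s).trans hsq) hq
    refine hge.antisymm' (not_lt.1 fun hlt' => ?_)
    exact (occPos_succ_le hlt' hq).not_gt (hqs.trans hnext)
  · rintro rfl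
    exact ⟨⟨hlt, hgt⟩, apply_occPos hj (by omega)⟩

end Alternation

section Coordinates

variable {n : ℕ} {ι : ℕ → ℕ}

theorem Admissible.frequently_eq (hadm : Admissible n ι) {i : ℕ} (h1 : 1 ≤ i) (hn : i ≤ n) :
    ∃ᶠ k in atTop, ι k = i :=
  frequently_atTop.2 (hadm.2.2 i h1 hn)

theorem xsj_zero_right (s : ℤ) : xsj ι n s 0 = 0 := by simp [xsj]

theorem xsj_natCast {s j : ℕ} (hs : 0 < s) (h1 : 1 ≤ j) (hn : j ≤ n) :
    xsj ι n s j = xc (occPos ι j s) := by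
  rw [xsj, if_pos ⟨by omega, h1, hn⟩, Int.toNat_natCast]

theorem xsj_apply_occPos (hadm : Admissible n ι) {t m : ℕ} (ht1 : 1 ≤ t) (htn : t ≤ n)
    (hm : 0 < m) (s : ℤ) (j : ℕ) :
    xsj ι n s j (occPos ι t m) = if j = t ∧ s = m then 1 else 0 := by
  by_cases h : 1 ≤ s ∧ 1 ≤ j ∧ j ≤ n
  · obtain ⟨hs, hj1, hjn⟩ := h
    lift s to ℕ using by omega
    rw [xsj_natCast (by omega) hj1 hjn, xc]
    simp only [occPos_inj (hadm.frequently_eq ht1 htn) (hadm.frequently_eq hj1 hjn) hm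
      (by omega : 0 < s), Nat.cast_inj, eq_comm]
  · rw [xsj, if_neg h, if_neg (by omega), Pi.zero_apply]

end Coordinates

section Beta

variable {n : ℕ} {ι : ℕ → ℕ} {A : ℕ → ℕ → ℤ}

theorem Adapted.smul_sum_filter_Ioo_occPos (had : Adapted n A ι) (hadm : Admissible n ι)
    {t j m : ℕ} (ht1 : 1 ≤ t) (htn : t ≤ n) (hj : j ≤ n) (hjt : j ≠ t) (hm : 0 < m) :
    (A t j : ℚ) • ∑ q ∈ Ioo (occPos ι t m) (occPos ι t (m + 1)) with ι q = j, xc q =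
      (A t j : ℚ) • xsj ι n (m + pval ι j t) j := by
  rcases eq_or_ne (A t j) 0 with hA | hA
  · simp [hA]
  congr 1
  rcases Nat.eq_zero_or_pos j with rfl | hj1
  · rw [xsj_zero_right, filter_false_of_mem, sum_empty]
    intro q hq
    have := (hadm.1 q ((Nat.zero_le _).trans_lt (mem_Ioo.1 hq).1)).1
    omega
  · have halt : Alternates ι t j := had t j ht1 htn hj1 hj hjt.symm hA
    rw [halt.filter_Ioo_occPos (hadm.frequently_eq ht1 htn) (hadm.frequently_eq hj1 hj) hjt.symm hm,
      sum_singleton, ← Nat.cast_add, xsj_natCast (by omega) hj1 hj]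

theorem Adapted.beta_occPos (had : Adapted n A ι) (hadm : Admissible n ι) {t m : ℕ}
    (ht1 : 1 ≤ t) (htn : t ≤ n) (hm : 0 < m) :
    beta A ι (occPos ι t m) = xsj ι n m t + xsj ι n (m + 1) t +
      ∑ j ∈ (range (n + 1)).erase t, (A t j : ℚ) • xsj ι n (m + pval ι j t) j := by
  have hi := hadm.frequently_eq ht1 htn
  have hmaps : ∀ q ∈ Ioo (occPos ι t m) (occPos ι t (m + 1)), ι q ∈ (range (n + 1)).erase t := by
    intro q hq
    have hqn := (hadm.1 q ((Nat.zero_le _).trans_lt (mem_Ioo.1 hq).1)).2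
    exact mem_erase.2 ⟨apply_ne_of_mem_Ioo_occPos hq, mem_range.2 (by omega)⟩
  have hsum : ∑ q ∈ Ioo (occPos ι t m) (occPos ι t (m + 1)), (A t (ι q) : ℚ) • xc q =
      ∑ j ∈ (range (n + 1)).erase t, (A t j : ℚ) • xsj ι n (m + pval ι j t) j := by
    rw [← sum_fiberwise_of_maps_to hmaps]
    refine sum_congr rfl fun j hj => ?_
    rw [mem_erase, mem_range] at hj
    rw [← had.smul_sum_filter_Ioo_occPos hadm ht1 htn (by omega) hj.1 hm, smul_sum]
    exact sum_congr rfl fun q hq => by rw [(mem_filter.1 hq).2]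
  rw [beta, if_neg (occPos_pos hi hm).ne', kplus_occPos hi hm, apply_occPos hi hm, hsum,
    xsj_natCast hm ht1 htn, ← Nat.cast_succ, xsj_natCast m.succ_pos ht1 htn]
  abel

theorem Adapted.beta_occPos_of_tridiagonal (had : Adapted n A ι) (hadm : Admissible n ι)
    {t m : ℕ} (ht1 : 1 ≤ t) (htn : t < n) (hm : 0 < m)
    (hA : ∀ j, j ≠ t → j ≠ t - 1 → j ≠ t + 1 → A t j = 0) :
    beta A ι (occPos ι t m) = xsj ι n m t + xsj ι n (m + 1) t +
      ((A t (t - 1) : ℚ) • xsj ι n (m + pval ι (t - 1) t) (t - 1) +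
        (A t (t + 1) : ℚ) • xsj ι n (m + pval ι (t + 1) t) (t + 1)) := by
  have hsub : {t - 1, t + 1} ⊆ (range (n + 1)).erase t := by
    intro j hj
    rw [mem_insert, mem_singleton] at hj
    rw [mem_erase, mem_range]
    omega
  rw [had.beta_occPos hadm ht1 htn.le hm, ← sum_subset hsub, sum_pair (by omega)]
  intro j hj hj'
  rw [mem_insert, mem_singleton, not_or] at hj'
  rw [hA j (ne_of_mem_erase hj) hj'.1 hj'.2, Int.cast_zero, zero_smul]

end Beta

section PABC

variable {n k : ℕ} {ι : ℕ → ℕ}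

theorem PABC_succ {t : ℕ} (ht1 : 1 ≤ t) (htn : t < n) :
    PABC ι n (t + 1) = PABC ι n t + pval ι (t + 1) t := by
  rw [PABC, PABC, if_pos (Nat.succ_le_of_lt htn), if_pos htn.le, sum_Icc_succ_top (by omega),
    Nat.add_sub_cancel]

theorem PABC_le_PABC_self (hk : k ≤ n) : PABC ι n k ≤ PABC ι n n := by
  rw [PABC, PABC, if_pos hk, if_pos le_rfl]
  exact sum_le_sum_of_subset (Icc_subset_Icc_right hk)

theorem PABC_self_le_add_sub {t : ℕ} (ht1 : 1 ≤ t) (htn : t ≤ n) :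
    PABC ι n n ≤ PABC ι n t + (n - t) := by
  induction htn using Nat.decreasingInduction with
  | self => simp
  | of_succ t htn ih =>
    have hsucc := PABC_succ (ι := ι) ht1 htn
    have hle := pval_le_one (ι := ι) (i := t + 1) (j := t)
    have := ih (by omega)
    omega

theorem one_sub_PABC_self_le {s : ℤ} (hk : k ≤ n) (hs : 1 - (PABC ι n k : ℤ) ≤ s) :
    1 - (PABC ι n n : ℤ) ≤ s := by
  have := PABC_le_PABC_self (ι := ι) hk
  omega

theorem TabCcond.one_sub_PABC_self_le {s : ℤ} {jf : ℕ → ℕ} (h : TabCcond ι n k s jf) :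
    1 - (PABC ι n n : ℤ) ≤ s := by
  rcases h with ⟨-, hk, -, -, hs⟩ | ⟨-, -, -, -, -, hs⟩
  · exact _root_.one_sub_PABC_self_le (by omega) hs
  · exact hs

end PABC

section Boxes

/-- The type `X` of the Cartan matrix, `B` or `C`. It lets both cases be treated at once. -/
inductive SeriesBC
  | B
  | C

namespace SeriesBC

/-- The Cartan matrix of type `X_n`. -/
def cartan : SeriesBC → ℕ → ℕ → ℕ → ℤ
  | B => cartanB
  | C => cartanC

/-- The boxes of type `X`, with the encoding of entries used for `boxB` and `boxC`. -/
noncomputable def box : SeriesBC → (ℕ → ℕ) → ℕ → ℤ → ℕ → ℕ → ℚ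
  | B => boxB
  | C => boxC

variable (X : SeriesBC) {n t : ℕ} {ι : ℕ → ℕ}

theorem cartan_eq_zero {j : ℕ} (htn : t < n) (hj : j ≠ t) (hj' : j ≠ t - 1) (hj'' : j ≠ t + 1) :
    X.cartan n t j = 0 := by
  cases X <;> simp only [cartan, cartanB, cartanC] <;> grind

theorem cartan_pred (ht1 : 1 ≤ t) (htn : t < n) : X.cartan n t (t - 1) = -1 := by
  cases X <;> simp only [cartan, cartanB, cartanC] <;> grind

theorem box_bar (ht1 : 1 ≤ t) (htn : t < n) (u : ℤ) :
    X.box ι n u (2 * n + 1 - t) =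
      xsj ι n (u + PABC ι n (t - 1) + n - t + 1) (t - 1)
        - xsj ι n (u + PABC ι n t + n - t + 1) t := by
  have hpred : 2 * n - (2 * n + 1 - t) = t - 1 := by omega
  have hself : 2 * n + 1 - (2 * n + 1 - t) = t := by omega
  cases X <;> simp only [box, boxB, boxC, hpred, hself]
  · rw [if_neg (by omega)]
  · rw [if_neg (by omega), if_neg (by omega), if_neg (by omega), if_neg (by omega)]

theorem box_bar_succ (ht1 : 1 ≤ t) (htn : t < n) (u : ℤ) :
    X.box ι n u (2 * n - t) =
      xsj ι n (u + PABC ι n t + n - t) t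
        + (X.cartan n t (t + 1) : ℚ) • xsj ι n (u + PABC ι n (t + 1) + n - t) (t + 1) := by
  have hself : 2 * n - (2 * n - t) = t := by omega
  have hsucc : 2 * n + 1 - (2 * n - t) = t + 1 := by omega
  have hshift : ∀ a : ℤ, a + n - ((t + 1 : ℕ) : ℤ) + 1 = a + n - t := fun a => by push_cast; ring
  cases X <;> simp only [box, boxB, boxC, cartan, cartanB, cartanC, hself, hsucc, hshift]
  · rw [if_neg (by omega), if_neg (by omega), if_neg (by omega), if_pos (.inl trivial)]
    module
  · rcases eq_or_ne (t + 1) n with rfl | hne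
    · have hbar : 2 * (t + 1) - t = t + 1 + 1 := by omega
      have hone : ∀ a : ℤ, a + (t + 1) - t = a + 1 := fun a => by ring
      simp [hbar, hone, sub_eq_add_neg (xsj _ _ _ _)]
    · rw [if_neg (by omega), if_neg (by omega), if_neg (by omega), if_neg (by omega),
        if_neg (by omega), if_neg (by omega), if_pos (.inl trivial)]
      module

theorem box_apply_occPos (hadm : Admissible n ι) (ht1 : 1 ≤ t) (htn : t < n) {m : ℕ} (hm : 0 < m)
    (u : ℤ) (e : ℕ) :
    X.box ι n u e (occPos ι t m) =
      (if e = t ∧ u = m - PABC ι n t then 1 else 0)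
        - (if e = t + 1 ∧ u = m - PABC ι n t - 1 then 1 else 0)
        + (if e = 2 * n - t ∧ u = m - PABC ι n t - n + t then 1 else 0)
        - (if e = 2 * n + 1 - t ∧ u = m - PABC ι n t - n + t - 1 then 1 else 0) := by
  cases X <;> simp only [box, boxB, boxC] <;> split_ifs <;>
    simp only [Pi.sub_apply, Pi.smul_apply, smul_eq_mul, xsj_apply_occPos hadm ht1 htn.le hm] <;>
    grind

theorem box_bar_eq_sub_beta (hadm : Admissible n ι) (had : Adapted n (X.cartan n) ι)
    (ht1 : 1 ≤ t) (htn : t < n) {m : ℕ} (hm : 0 < m) {u : ℤ}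
    (hu : (m : ℤ) = u + PABC ι n t + n - t) :
    X.box ι n u (2 * n + 1 - t) =
      X.box ι n u (2 * n - t) - beta (X.cartan n) ι (occPos ι t m) := by
  have hsucc : u + PABC ι n (t + 1) + n - t = m + pval ι (t + 1) t := by
    rw [PABC_succ ht1 htn, hu]
    push_cast
    ring
  have hpred : xsj ι n (u + PABC ι n (t - 1) + n - t + 1) (t - 1) =
      xsj ι n (m + pval ι (t - 1) t) (t - 1) := by
    rcases eq_or_lt_of_le' ht1 with rfl | ht2
    · simp only [Nat.sub_self, xsj_zero_right]
    · obtain ⟨t, rfl⟩ := Nat.exists_eq_add_of_le' ht1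
      have hP := PABC_succ (ι := ι) (n := n) (t := t) (by omega) (by omega)
      have hp := pval_add_pval_swap (hadm.frequently_eq (i := t) (by omega) (by omega))
        (hadm.frequently_eq ht1 htn.le) t.succ_ne_self.symm
      rw [Nat.add_sub_cancel]
      congr 1
      omega
  rw [had.beta_occPos_of_tridiagonal hadm ht1 htn hm fun j => X.cartan_eq_zero htn,
    X.cartan_pred ht1 htn, X.box_bar ht1 htn, X.box_bar_succ ht1 htn, hsucc, hpred, ← hu]
  module

end SeriesBC

end Boxes

section Tableaux

/-- The column `[j_1, …, j_k]` has the entry `v` at position `z`. The position is an integer, and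
the condition fails when it lies outside `[1, k]`. -/
def HasEntry (k : ℕ) (jf : ℕ → ℕ) (z : ℤ) (v : ℕ) : Prop :=
  1 ≤ z ∧ z ≤ k ∧ jf z.toNat = v

instance (k : ℕ) (jf : ℕ → ℕ) (z : ℤ) (v : ℕ) : Decidable (HasEntry k jf z v) :=
  inferInstanceAs (Decidable (_ ∧ _ ∧ _))

theorem hasEntry_natCast {k i v : ℕ} {jf : ℕ → ℕ} :
    HasEntry k jf i v ↔ 1 ≤ i ∧ i ≤ k ∧ jf i = v := by
  simp [HasEntry]

theorem sum_ite_eq_hasEntry {R : Type*} [AddCommMonoidWithOne R] (k : ℕ) (jf : ℕ → ℕ) (v : ℕ)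
    (a d : ℤ) :
    ∑ i ∈ Icc 1 k, (if jf i = v ∧ a - i = d then (1 : R) else 0) =
      if HasEntry k jf (a - d) v then 1 else 0 := by
  have hterm : ∀ i ∈ Icc 1 k, (if jf i = v ∧ a - i = d then (1 : R) else 0) =
      if i = (a - d).toNat then (if HasEntry k jf (a - d) v then 1 else 0) else 0 := by
    intro i hi
    grind [HasEntry]
  rw [sum_congr rfl hterm, sum_ite_eq']
  grind [HasEntry]

theorem tab_update (box : ℤ → ℕ → ℕ → ℚ) (s : ℤ) {k i : ℕ} (hi : i ∈ Icc 1 k) (jf : ℕ → ℕ)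
    (e : ℕ) : tab box s k (Function.update jf i e) =
      tab box s k jf - (box (s + k - i) (jf i) - box (s + k - i) e) := by
  simp only [tab, Function.apply_update (fun l => box (s + k - (l : ℕ)))]
  rw [sum_update_of_mem hi, sum_eq_add_sum_sdiff_singleton_of_mem hi]
  abel

theorem Sop_of_apply_eq_one {A : ℕ → ℕ → ℤ} {ι : ℕ → ℕ} {k : ℕ} {φ : ℕ → ℚ} (h : φ k = 1) :
    Sop A ι k φ = φ - beta A ι k := by
  rw [Sop, h, if_pos one_pos, one_smul]

variable (X : SeriesBC) {n t : ℕ} {ι : ℕ → ℕ}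

theorem tab_box_apply_occPos (hadm : Admissible n ι) (ht1 : 1 ≤ t) (htn : t < n) {m : ℕ}
    (hm : 0 < m) (s : ℤ) (k : ℕ) (jf : ℕ → ℕ) {z : ℤ} (hz : z = s + k - (m - PABC ι n t)) :
    tab (X.box ι n) s k jf (occPos ι t m) =
      (if HasEntry k jf z t then 1 else 0)
        - (if HasEntry k jf (z + 1) (t + 1) then 1 else 0)
        + (if HasEntry k jf (z + n - t) (2 * n - t) then 1 else 0)
        - (if HasEntry k jf (z + n - t + 1) (2 * n + 1 - t) then 1 else 0) := by
  simp only [tab, Finset.sum_apply, X.box_apply_occPos hadm ht1 htn hm, sum_sub_distrib,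
    sum_add_distrib, sum_ite_eq_hasEntry]
  rw [← hz, show s + k - (m - PABC ι n t - 1) = z + 1 by omega,
    show s + k - (m - PABC ι n t - n + t) = z + n - t by omega,
    show s + k - (m - PABC ι n t - n + t - 1) = z + n - t + 1 by omega]

theorem tab_box_apply_occPos_of_bar (hadm : Admissible n ι) (ht1 : 1 ≤ t) (htn : t < n) {m : ℕ}
    (hm : 0 < m) {s : ℤ} {k : ℕ} {jf : ℕ → ℕ} {i : ℕ} (hi1 : 1 ≤ i) (hik : i ≤ k)
    (hj : jf i = 2 * n - t) (hj' : i < k → jf (i + 1) ≠ 2 * n + 1 - t)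
    (hmi : (m : ℤ) = s + k - i + n - t + PABC ι n t) :
    tab (X.box ι n) s k jf (occPos ι t m) =
      1 + (if HasEntry k jf (i + t - n) t then 1 else 0)
        - (if HasEntry k jf (i + t + 1 - n) (t + 1) then 1 else 0) := by
  have hbar_succ : HasEntry k jf i (2 * n - t) := hasEntry_natCast.2 ⟨hi1, hik, hj⟩
  have hbar : ¬ HasEntry k jf ((i + 1 : ℕ) : ℤ) (2 * n + 1 - t) := fun h => by
    obtain ⟨-, hik', hbar⟩ := hasEntry_natCast.1 h
    exact hj' hik' hbar
  rw [tab_box_apply_occPos X hadm ht1 htn hm s k jf (z := i + t - n) (by omega),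
    show (i + t - n + 1 : ℤ) = i + t + 1 - n by ring,
    show (i + t - n + n - t : ℤ) = i by ring, ← Nat.cast_succ, if_pos hbar_succ, if_neg hbar]
  ring

end Tableaux

theorem coeff_barred_BC_general (X : SeriesBC) {n : ℕ} {ι : ℕ → ℕ} (hadm : Admissible n ι)
    (had : Adapted n (X.cartan n) ι) {k : ℕ} {s : ℤ} {jf : ℕ → ℕ}
    (hs : 1 - (PABC ι n n : ℤ) ≤ s) {t : ℕ} (ht1 : 1 ≤ t) (htn : t < n) {i' : ℕ}
    (hi1 : 1 ≤ i') (hik : i' ≤ k) (hj : jf i' = 2 * n - t)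
    (hj' : i' < k → jf (i' + 1) ≠ 2 * n + 1 - t) {M : ℤ}
    (hM : M = s + k - i' + n - t + PABC ι n t) {c : ℚ}
    (hc : c = tab (X.box ι n) s k jf (occPos ι t M.toNat)) :
    1 ≤ M ∧
      (c = 0 ∨ c = 1 ∨ c = 2) ∧
      (c = 0 ↔ HasEntry k jf (i' + t + 1 - n) (t + 1) ∧ ¬ HasEntry k jf (i' + t - n) t) ∧
      (c = 2 ↔ ¬ HasEntry k jf (i' + t + 1 - n) (t + 1) ∧ HasEntry k jf (i' + t - n) t) ∧
      (c = 1 → Ssj (X.cartan n) ι M.toNat t (tab (X.box ι n) s k jf) =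
        tab (X.box ι n) s k (Function.update jf i' (2 * n + 1 - t))) := by
  have hM1 : 1 ≤ M := by
    have := PABC_self_le_add_sub (ι := ι) ht1 htn.le
    omega
  lift M to ℕ using by omega
  have hm : 0 < M := by omega
  rw [Int.toNat_natCast] at hc ⊢
  have hcoeff := tab_box_apply_occPos_of_bar X hadm ht1 htn hm hi1 hik hj hj' hM
  rw [← hc] at hcoeff
  refine ⟨hM1, ?_, ?_, ?_, fun hc1 => ?_⟩
  · rw [hcoeff]
    split_ifs <;> norm_num
  · rw [hcoeff]
    split_ifs with h h' h' <;> simp only [h, h'] <;> norm_num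
  · rw [hcoeff]
    split_ifs with h h' h' <;> simp only [h, h'] <;> norm_num
  · rw [Ssj, Sop_of_apply_eq_one (hc.symm.trans hc1),
      tab_update _ s (mem_Icc.2 ⟨hi1, hik⟩), hj,
      X.box_bar_eq_sub_beta hadm had ht1 htn hm (u := s + k - i') (by omega), sub_sub_cancel]

/-- Lemma 5.1 (types B and C): behaviour of the coefficient of `x_{M,t}` in a tableau
`T = [j_1,…,j_k]^X_s` having an entry `j_{i'} = ovl(t+1)` (encoded `2n-t`) with
`j_{i'+1} ≠ ovl(t)` (encoded `2n+1-t`), where `M = s+k-i'+n-t+P(t)`.  Out-of-range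
conditions `j_l = t` are regarded as violated.  The coefficient of `x_{M,t}` in `T` is the
value of `T` at the position of the `M`-th occurrence of `t` in `ι`. -/
theorem coeff_barred_BC (n : ℕ) (hn : 2 ≤ n) (ι : ℕ → ℕ) (hadm : Admissible n ι) :
    (Adapted n (cartanB n) ι →
      ∀ (k : ℕ) (s : ℤ) (jf : ℕ → ℕ),
        1 ≤ k → k ≤ n →
        (∀ i, 1 ≤ i → i ≤ k → 1 ≤ jf i ∧ jf i ≤ 2 * n) →
        (∀ i, 1 ≤ i → i < k → jf i < jf (i + 1)) →
        (k = n → ∀ l m, 1 ≤ l → l < m → m ≤ k → absJ n (jf l) ≠ absJ n (jf m)) →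
        1 - (PABC ι n k : ℤ) ≤ s →
        ∀ t, 1 ≤ t → t ≤ n - 1 →
        ∀ i', 1 ≤ i' → i' ≤ k → jf i' = 2 * n - t → (i' < k → jf (i' + 1) ≠ 2 * n + 1 - t) →
        ∀ M : ℤ, M = s + (k : ℤ) - (i' : ℤ) + (n : ℤ) - (t : ℤ) + (PABC ι n t : ℤ) →
        ∀ c : ℚ, c = tab (boxB ι n) s k jf (occPos ι t M.toNat) →
          1 ≤ M ∧
          (c = 0 ∨ c = 1 ∨ c = 2) ∧
          (c = 0 ↔
            ((1 ≤ (i' : ℤ) + (t : ℤ) + 1 - (n : ℤ) ∧ (i' : ℤ) + (t : ℤ) + 1 - (n : ℤ) ≤ (k : ℤ) ∧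
                jf ((i' : ℤ) + (t : ℤ) + 1 - (n : ℤ)).toNat = t + 1) ∧
             ¬(1 ≤ (i' : ℤ) + (t : ℤ) - (n : ℤ) ∧ (i' : ℤ) + (t : ℤ) - (n : ℤ) ≤ (k : ℤ) ∧
                jf ((i' : ℤ) + (t : ℤ) - (n : ℤ)).toNat = t))) ∧
          (c = 2 ↔
            (¬(1 ≤ (i' : ℤ) + (t : ℤ) + 1 - (n : ℤ) ∧ (i' : ℤ) + (t : ℤ) + 1 - (n : ℤ) ≤ (k : ℤ) ∧
                jf ((i' : ℤ) + (t : ℤ) + 1 - (n : ℤ)).toNat = t + 1) ∧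
             (1 ≤ (i' : ℤ) + (t : ℤ) - (n : ℤ) ∧ (i' : ℤ) + (t : ℤ) - (n : ℤ) ≤ (k : ℤ) ∧
                jf ((i' : ℤ) + (t : ℤ) - (n : ℤ)).toNat = t))) ∧
          (c = 1 →
            Ssj (cartanB n) ι M.toNat t (tab (boxB ι n) s k jf) =
              tab (boxB ι n) s k (Function.update jf i' (2 * n + 1 - t)))) ∧
    (Adapted n (cartanC n) ι →
      ∀ (k : ℕ) (s : ℤ) (jf : ℕ → ℕ),
        TabCcond ι n k s jf →
        ∀ t, 1 ≤ t → t ≤ n - 1 →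
        ∀ i', 1 ≤ i' → i' ≤ k → jf i' = 2 * n - t → (i' < k → jf (i' + 1) ≠ 2 * n + 1 - t) →
        ∀ M : ℤ, M = s + (k : ℤ) - (i' : ℤ) + (n : ℤ) - (t : ℤ) + (PABC ι n t : ℤ) →
        ∀ c : ℚ, c = tab (boxC ι n) s k jf (occPos ι t M.toNat) →
          1 ≤ M ∧
          (c = 0 ∨ c = 1 ∨ c = 2) ∧
          (c = 0 ↔
            ((1 ≤ (i' : ℤ) + (t : ℤ) + 1 - (n : ℤ) ∧ (i' : ℤ) + (t : ℤ) + 1 - (n : ℤ) ≤ (k : ℤ) ∧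
                jf ((i' : ℤ) + (t : ℤ) + 1 - (n : ℤ)).toNat = t + 1) ∧
             ¬(1 ≤ (i' : ℤ) + (t : ℤ) - (n : ℤ) ∧ (i' : ℤ) + (t : ℤ) - (n : ℤ) ≤ (k : ℤ) ∧
                jf ((i' : ℤ) + (t : ℤ) - (n : ℤ)).toNat = t))) ∧
          (c = 2 ↔
            (¬(1 ≤ (i' : ℤ) + (t : ℤ) + 1 - (n : ℤ) ∧ (i' : ℤ) + (t : ℤ) + 1 - (n : ℤ) ≤ (k : ℤ) ∧
                jf ((i' : ℤ) + (t : ℤ) + 1 - (n : ℤ)).toNat = t + 1) ∧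
             (1 ≤ (i' : ℤ) + (t : ℤ) - (n : ℤ) ∧ (i' : ℤ) + (t : ℤ) - (n : ℤ) ≤ (k : ℤ) ∧
                jf ((i' : ℤ) + (t : ℤ) - (n : ℤ)).toNat = t))) ∧
          (c = 1 →
            Ssj (cartanC n) ι M.toNat t (tab (boxC ι n) s k jf) =
              tab (boxC ι n) s k (Function.update jf i' (2 * n + 1 - t)))) := by
  exact ⟨fun had _ _ _ _ hk _ _ _ hs _ ht1 htn _ hi1 hik hj hj' _ hM _ hc =>
      coeff_barred_BC_general .B hadm had (one_sub_PABC_self_le hk hs) ht1 (by omega) hi1 hik hj hj'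
        hM hc,
    fun had _ _ _ hT _ ht1 htn _ hi1 hik hj hj' _ hM _ hc =>
      coeff_barred_BC_general .C hadm had hT.one_sub_PABC_self_le ht1 (by omega) hi1 hik hj hj'
        hM hc⟩
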